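/- arXiv:2102.02730 — 3 statements merged into one kernel-verified Lean document; each statement's English description precedes it below -/
import Mathlib

section
/- Let n ≥ 1, let U be an n×n real orthogonal matrix (Uᵀ * U = 1), and let p, v : Fin n → ℝ satisfy p ℓ ≥ 0 and v ℓ > 0 for all ℓ. Define the diagonal matrices Λ_x = diagonal p, Λ_v = diagonal v, and Λ = diagonal (fun ℓ => Real.sqrt ((p ℓ + v ℓ) / v ℓ)). Let ε ∈ ℝ with ε = 1 or ε = -1, and set A = ε • (U * Λ * Uᵀ), V = U * Λ_v * Uᵀ, P = U * Λ_x * Uᵀ. Then P is positive semidefinite, P + V is invertible, and P satisfies the algebraic Riccati equation P = A * P * Aᵀ - A * P * (P + V)⁻¹ * P * Aᵀ. -/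
open Matrix

/-!
Since `P - P (P + V)⁻¹ P = P (P + V)⁻¹ V`, the Riccati equation says `A P (P + V)⁻¹ V Aᴴ = P`.
If `A` commutes with `P` and `V`, it can be moved past `P (P + V)⁻¹`, which leaves
`P (P + V)⁻¹ (A V Aᴴ)`. This is `P` as soon as `A V Aᴴ = P + V`, and the eigenvalues
`√((p + v) / v)` of `A` are chosen to achieve exactly that.
-/

section Riccati

variable {ι R : Type*} [Fintype ι] [DecidableEq ι] [CommRing R] {A B P V : Matrix ι ι R}

theorem sub_mul_inv_add_mul_self (hPV : IsUnit (P + V).det) :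
    P - P * (P + V)⁻¹ * P = P * (P + V)⁻¹ * V := by
  rw [sub_eq_iff_eq_add', ← Matrix.mul_add, nonsing_inv_mul_cancel_right _ P hPV]

theorem riccati_of_commute (hPV : IsUnit (P + V).det) (hAP : Commute A P) (hAV : Commute A V)
    (hAVB : A * V * B = P + V) :
    P = A * P * B - A * P * (P + V)⁻¹ * P * B := by
  have hA_gain : Commute A (P * (P + V)⁻¹) := by
    rw [← Matrix.zpow_neg_one]
    exact hAP.mul_right (Matrix.Commute.zpow_right (hAP.add_right hAV) (-1))
  symm
  calc A * P * B - A * P * (P + V)⁻¹ * P * B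
      = A * (P - P * (P + V)⁻¹ * P) * B := by noncomm_ring
    _ = A * (P * (P + V)⁻¹) * V * B := by
        rw [sub_mul_inv_add_mul_self hPV, ← Matrix.mul_assoc]
    _ = P * (P + V)⁻¹ * (A * V * B) := by rw [hA_gain.eq]; simp only [Matrix.mul_assoc]
    _ = P := by rw [hAVB, nonsing_inv_mul_cancel_right _ P hPV]

end Riccati

section ConjDiagonal

variable {ι κ R : Type*} [Fintype ι] [DecidableEq ι] [Fintype κ]

theorem conj_diagonal_mul_conj_diagonal [Semiring R] {U : Matrix κ ι R} {W : Matrix ι κ R}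
    (hWU : W * U = 1) (a b : ι → R) :
    U * diagonal a * W * (U * diagonal b * W) = U * diagonal (fun i => a i * b i) * W := by
  calc U * diagonal a * W * (U * diagonal b * W)
      = U * (diagonal a * (W * U) * diagonal b) * W := by simp only [Matrix.mul_assoc]
    _ = U * diagonal (fun i => a i * b i) * W := by
        rw [hWU, Matrix.mul_one, diagonal_mul_diagonal]

theorem commute_conj_diagonal [CommSemiring R] {U : Matrix κ ι R} {W : Matrix ι κ R}
    (hWU : W * U = 1) (a b : ι → R) :
    Commute (U * diagonal a * W) (U * diagonal b * W) := by
  rw [commute_iff_eq, conj_diagonal_mul_conj_diagonal hWU, conj_diagonal_mul_conj_diagonal hWU,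
    funext fun i => mul_comm (a i) (b i)]

end ConjDiagonal

theorem sqrt_div_mul_mul_sqrt_div {x y : ℝ} (hx : 0 ≤ x) (hy : 0 < y) :
    √(x / y) * y * √(x / y) = x := by
  rw [mul_right_comm, Real.mul_self_sqrt (div_nonneg hx hy.le), div_mul_cancel₀ x hy.ne']

section Unitary

open scoped ComplexOrder

variable {ι κ 𝕜 : Type*} [Fintype ι] [DecidableEq ι] [RCLike 𝕜]

theorem posSemidef_conj_diagonal_ofReal [Finite κ] (U : Matrix κ ι 𝕜) {p : ι → ℝ}
    (hp : ∀ i, 0 ≤ p i) :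
    (U * diagonal (fun i => (p i : 𝕜)) * Uᴴ).PosSemidef :=
  (PosSemidef.diagonal fun i => RCLike.ofReal_nonneg.2 (hp i)).mul_mul_conjTranspose_same U

theorem posDef_conj_diagonal_ofReal {U : Matrix ι ι 𝕜} (hU : Uᴴ * U = 1) {v : ι → ℝ}
    (hv : ∀ i, 0 < v i) :
    (U * diagonal (fun i => (v i : 𝕜)) * Uᴴ).PosDef :=
  (PosDef.diagonal fun i => RCLike.ofReal_pos.2 (hv i)).mul_mul_conjTranspose_same
    (vecMul_injective_of_isUnit (IsUnit.of_mul_eq_one_right _ hU))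

theorem smul_conj_diagonal_mul_mul_conjTranspose [Fintype κ] {U : Matrix κ ι 𝕜} (hU : Uᴴ * U = 1)
    {ε : 𝕜} (hε : ‖ε‖ = 1) (s v : ι → ℝ) :
    ε • (U * diagonal (fun i => (s i : 𝕜)) * Uᴴ) * (U * diagonal (fun i => (v i : 𝕜)) * Uᴴ) *
        (ε • (U * diagonal (fun i => (s i : 𝕜)) * Uᴴ))ᴴ =
      U * diagonal (fun i => ((s i * v i * s i : ℝ) : 𝕜)) * Uᴴ := by
  have hS : (U * diagonal (fun i => (s i : 𝕜)) * Uᴴ)ᴴ = U * diagonal (fun i => (s i : 𝕜)) * Uᴴ :=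
    isHermitian_mul_mul_conjTranspose U (isHermitian_diagonal_iff.2 fun i => RCLike.conj_ofReal _)
  have hεε : star ε * ε = 1 := by simp [RCLike.star_def, RCLike.conj_mul, hε]
  rw [conjTranspose_smul, hS, Matrix.smul_mul, Matrix.smul_mul, Matrix.mul_smul, smul_comm,
    smul_smul, hεε, one_smul, conj_diagonal_mul_conj_diagonal hU,
    conj_diagonal_mul_conj_diagonal hU]
  simp only [RCLike.ofReal_mul]

theorem stmt_0_general {U : Matrix ι ι 𝕜} (hU : Uᴴ * U = 1)
    {p v : ι → ℝ} (hp : ∀ i, 0 ≤ p i) (hv : ∀ i, 0 < v i) {ε : 𝕜} (hε : ‖ε‖ = 1)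
    {A V P : Matrix ι ι 𝕜}
    (hA : A = ε • (U * diagonal (fun i => (√((p i + v i) / v i) : 𝕜)) * Uᴴ))
    (hV : V = U * diagonal (fun i => (v i : 𝕜)) * Uᴴ)
    (hP : P = U * diagonal (fun i => (p i : 𝕜)) * Uᴴ) :
    P.PosSemidef ∧ IsUnit (P + V).det ∧
      P = A * P * Aᴴ - A * P * (P + V)⁻¹ * P * Aᴴ := by
  have hP_psd : P.PosSemidef := hP ▸ posSemidef_conj_diagonal_ofReal U hp
  have hV_pd : V.PosDef := hV ▸ posDef_conj_diagonal_ofReal hU hv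
  have hPV : IsUnit (P + V).det :=
    (isUnit_iff_isUnit_det _).1 (PosDef.posSemidef_add hP_psd hV_pd).isUnit
  have hAP : Commute A P := by
    rw [hA, hP]; exact (commute_conj_diagonal hU _ _).smul_left ε
  have hAV : Commute A V := by
    rw [hA, hV]; exact (commute_conj_diagonal hU _ _).smul_left ε
  have hAVA : A * V * Aᴴ = P + V := by
    rw [hA, hV, hP, smul_conj_diagonal_mul_mul_conjTranspose hU hε, ← Matrix.add_mul,
      ← Matrix.mul_add, diagonal_add]
    simp only [sqrt_div_mul_mul_sqrt_div (add_nonneg (hp _) (hv _).le) (hv _), RCLike.ofReal_add]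
  exact ⟨hP_psd, hPV, riccati_of_commute hPV hAP hAV hAVA⟩

end Unitary

theorem stmt_0 (n : ℕ) (hn : 1 ≤ n)
    (U : Matrix (Fin n) (Fin n) ℝ) (hU : Uᵀ * U = 1)
    (p v : Fin n → ℝ) (hp : ∀ ℓ, 0 ≤ p ℓ) (hv : ∀ ℓ, 0 < v ℓ)
    (ε : ℝ) (hε : ε = 1 ∨ ε = -1)
    (Λx Λv Λ A V P : Matrix (Fin n) (Fin n) ℝ)
    (hΛx : Λx = Matrix.diagonal p)
    (hΛv : Λv = Matrix.diagonal v)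
    (hΛ : Λ = Matrix.diagonal (fun ℓ => Real.sqrt ((p ℓ + v ℓ) / v ℓ)))
    (hA : A = ε • (U * Λ * Uᵀ))
    (hV : V = U * Λv * Uᵀ)
    (hP : P = U * Λx * Uᵀ) :
    P.PosSemidef ∧ IsUnit (P + V).det ∧
      P = A * P * Aᵀ - A * P * (P + V)⁻¹ * P * Aᵀ := by
  subst hΛx hΛv hΛ
  have hε_norm : ‖ε‖ = 1 := by rcases hε with rfl | rfl <;> simp
  exact stmt_0_general (𝕜 := ℝ) hU hp hv hε_norm hA hV hP
end

section
/- Let n ≥ 1 and let p, v : Fin n → ℝ satisfy p ℓ ≥ 0 and v ℓ > 0 for all ℓ. Define diagonal matrices Λ_x = diagonal p, Λ_v = diagonal v, and Λ = diagonal (fun ℓ => Real.sqrt ((p ℓ + v ℓ) / v ℓ)). Then Λ_x + Λ_v is invertible and Λ_x = Λ * Λ_x * Λ - Λ * Λ_x * (Λ_x + Λ_v)⁻¹ * Λ_x * Λ. -/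
open Matrix

/-!
The argument works in any ring with `x + v` invertible. Writing `x = (x + v) - v` gives
`x - x (x + v)⁻¹ x = x (x + v)⁻¹ v`, so the right-hand side of the equation is
`l x (x + v)⁻¹ v l`. If `l` commutes with `x` and `v`, it moves past `x (x + v)⁻¹`, and
`l v l = x + v` cancels the inverse. For diagonal matrices `l v l = x + v` says that the
entries of `l` are square roots of `(p + v) / v`.
-/

section Ring

variable {R : Type*} [Ring R]

theorem sub_mul_invOf_add_mul_self (x v : R) [Invertible (x + v)] :
    x - x * ⅟(x + v) * x = x * ⅟(x + v) * v := by
  rw [sub_eq_iff_eq_add', ← mul_add, invOf_mul_cancel_right]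

theorem riccati_eq_of_commute {l x v : R} [Invertible (x + v)]
    (hx : Commute l x) (hv : Commute l v) (hl : l * v * l = x + v) :
    x = l * x * l - l * x * ⅟(x + v) * x * l := by
  have commute_gain : Commute l (x * ⅟(x + v)) :=
    hx.mul_right (hx.add_right hv).invOf_right
  symm
  calc
    l * x * l - l * x * ⅟(x + v) * x * l = l * (x - x * ⅟(x + v) * x) * l := by noncomm_ring
    _ = l * (x * ⅟(x + v)) * v * l := by rw [sub_mul_invOf_add_mul_self, ← mul_assoc l]
    _ = x * ⅟(x + v) * (l * v * l) := by simp only [commute_gain.eq, mul_assoc]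
    _ = x := by rw [hl, invOf_mul_cancel_right]

end Ring

theorem sqrt_div_mul_mul_sqrt_div_s1 {a b : ℝ} (hab : 0 ≤ a / b) (hb : b ≠ 0) :
    √(a / b) * b * √(a / b) = a := by
  rw [mul_right_comm, Real.mul_self_sqrt hab, div_mul_cancel₀ a hb]

theorem stmt_1_general {ι : Type*} [Fintype ι] [DecidableEq ι] (p v : ι → ℝ)
    (hpv : ∀ i, 0 < (p i + v i) / v i) (Λx Λv Λ : Matrix ι ι ℝ)
    (hΛx : Λx = diagonal p) (hΛv : Λv = diagonal v)
    (hΛ : Λ = diagonal fun i => √((p i + v i) / v i)) :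
    IsUnit (Λx + Λv).det ∧
      Λx = Λ * Λx * Λ - Λ * Λx * (Λx + Λv)⁻¹ * Λx * Λ := by
  subst hΛx hΛv hΛ
  have hne (i : ι) : p i + v i ≠ 0 ∧ v i ≠ 0 := div_ne_zero_iff.mp (hpv i).ne'
  have hdet : IsUnit (diagonal p + diagonal v).det := by
    rw [diagonal_add, ← isUnit_iff_isUnit_det, isUnit_diagonal, Pi.isUnit_iff]
    exact fun i => (hne i).1.isUnit
  refine ⟨hdet, ?_⟩
  let := invertibleOfIsUnitDet _ hdet
  rw [← invOf_eq_nonsing_inv]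
  apply riccati_eq_of_commute (commute_diagonal _ _) (commute_diagonal _ _)
  simp only [diagonal_mul_diagonal, diagonal_add,
    sqrt_div_mul_mul_sqrt_div_s1 (hpv _).le (hne _).2]

theorem stmt_1 (n : ℕ) (hn : 1 ≤ n)
    (p v : Fin n → ℝ) (hp : ∀ ℓ, 0 ≤ p ℓ) (hv : ∀ ℓ, 0 < v ℓ)
    (Λx Λv Λ : Matrix (Fin n) (Fin n) ℝ)
    (hΛx : Λx = Matrix.diagonal p)
    (hΛv : Λv = Matrix.diagonal v)
    (hΛ : Λ = Matrix.diagonal (fun ℓ => Real.sqrt ((p ℓ + v ℓ) / v ℓ))) :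
    IsUnit (Λx + Λv).det ∧
      Λx = Λ * Λx * Λ - Λ * Λx * (Λx + Λv)⁻¹ * Λx * Λ :=
  stmt_1_general p v (fun ℓ => div_pos (add_pos_of_nonneg_of_pos (hp ℓ) (hv ℓ)) (hv ℓ))
    Λx Λv Λ hΛx hΛv hΛ
end

section
/- Let n, m ≥ 1, let λ : Fin n → ℝ with λ ℓ ≠ 0 for all ℓ, and let Λ = diagonal λ (an n×n matrix). Let F : Fin p → Matrix (Fin m) (Fin m) ℝ and G : Fin q → Matrix (Fin m) (Fin m) ℝ be families of m×m matrices such that for each ℓ the m×m matrix B ℓ := 1 + ∑ j, (λ ℓ)^{-(j+1)} • G j is invertible. Set M₁ := 1 - ∑ i, (Λ⁻¹ ^ (i+1) ⊗ₖ F i) and M₂ := 1 + ∑ j, (Λ⁻¹ ^ (j+1) ⊗ₖ G j), both (n·m)×(n·m) matrices indexed by Fin n × Fin m. Then M₂ is invertible, and M₁ * M₂⁻¹ is block diagonal with blocks given by the scalar substitutions: for all ℓ, ℓ' : Fin n and a, b : Fin m, (M₁ * M₂⁻¹) (ℓ, a) (ℓ', b) equals ((1 - ∑ i, (λ ℓ)^{-(i+1)}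 • F i) * (B ℓ)⁻¹) a b if ℓ = ℓ', and 0 otherwise. -/
open Matrix Kronecker

/-!
Sending a family `P` of `m × m` matrices to the block diagonal matrix with blocks `P ℓ` is a ring
homomorphism, and it maps the family `ℓ ↦ d ℓ • A` to `diagonal d ⊗ₖ A`. Hence `M₁` and `M₂` are
the images of the families obtained by substituting `λ ℓ` for `Λ`, and since ring homomorphisms
preserve inverses, `M₁ * M₂⁻¹` is computed block by block.
-/

section LeftBlockDiagonal

variable {o m R : Type*} [Fintype o] [DecidableEq o] [Fintype m] [DecidableEq m]

/-- The block diagonal matrix with a given family of square blocks, as a ring homomorphism. The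
block index is the left component of the index pair, as in `diagonal d ⊗ₖ A`, whereas
`Matrix.blockDiagonal` puts it on the right. -/
def leftBlockDiagonal [Semiring R] : (o → Matrix m m R) →+* Matrix (o × m) (o × m) R :=
  (compRingEquiv o m R).toRingHom.comp (diagonalRingHom o (Matrix m m R))

theorem leftBlockDiagonal_apply [Semiring R] (P : o → Matrix m m R) (ℓ ℓ' : o) (a b : m) :
    leftBlockDiagonal P (ℓ, a) (ℓ', b) = if ℓ = ℓ' then P ℓ a b else 0 := by
  change diagonal P ℓ ℓ' a b = _
  rw [diagonal_apply]
  split_ifs <;> rfl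

theorem diagonal_kronecker_eq_leftBlockDiagonal [Semiring R] (d : o → R) (A : Matrix m m R) :
    diagonal d ⊗ₖ A = leftBlockDiagonal fun ℓ ↦ d ℓ • A := by
  ext ⟨ℓ, a⟩ ⟨ℓ', b⟩
  rw [kronecker_apply, diagonal_apply, leftBlockDiagonal_apply, ite_mul, zero_mul,
    Matrix.smul_apply, smul_eq_mul]

theorem sum_diagonal_pow_kronecker [Semiring R] {ι : Type*} (s : Finset ι) (d : o → R)
    (e : ι → ℕ) (A : ι → Matrix m m R) :
    ∑ i ∈ s, (diagonal d ^ e i) ⊗ₖ A i = leftBlockDiagonal fun ℓ ↦ ∑ i ∈ s, d ℓ ^ e i • A i := by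
  simp only [diagonal_pow, diagonal_kronecker_eq_leftBlockDiagonal, ← map_sum]
  congr 1
  ext1 ℓ
  simp only [Finset.sum_apply, Pi.pow_apply]

variable [CommRing R]

theorem leftBlockDiagonal_mul_inv {B : o → Matrix m m R} (hB : ∀ ℓ, IsUnit (B ℓ).det) :
    leftBlockDiagonal B * leftBlockDiagonal (fun ℓ ↦ (B ℓ)⁻¹) = 1 := by
  have blockwise : (B * fun ℓ ↦ (B ℓ)⁻¹) = 1 := funext fun ℓ ↦ mul_nonsing_inv _ (hB ℓ)
  rw [← map_mul, blockwise, map_one]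

theorem inv_diagonal_units (u : o → Rˣ) :
    (diagonal fun ℓ ↦ (u ℓ : R))⁻¹ = diagonal fun ℓ ↦ (↑(u ℓ)⁻¹ : R) :=
  inv_eq_right_inv <| by simp only [diagonal_mul_diagonal, Units.mul_inv, diagonal_one]

theorem stmt_5_general {p q : ℕ} (lam : o → Rˣ)
    (Λ : Matrix o o R) (hΛ : Λ = diagonal fun ℓ ↦ (lam ℓ : R))
    (F : Fin p → Matrix m m R) (G : Fin q → Matrix m m R) (B : o → Matrix m m R)
    (hB : ∀ ℓ, B ℓ = 1 + ∑ j : Fin q, (↑(lam ℓ)⁻¹ : R) ^ ((j : ℕ) + 1) • G j)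
    (hBinv : ∀ ℓ, IsUnit (B ℓ).det)
    (M₁ M₂ : Matrix (o × m) (o × m) R)
    (hM₁ : M₁ = 1 - ∑ i : Fin p, (Λ⁻¹ ^ ((i : ℕ) + 1)) ⊗ₖ F i)
    (hM₂ : M₂ = 1 + ∑ j : Fin q, (Λ⁻¹ ^ ((j : ℕ) + 1)) ⊗ₖ G j) :
    IsUnit M₂.det ∧
      M₁ * M₂⁻¹ = leftBlockDiagonal fun ℓ ↦
        (1 - ∑ i : Fin p, (↑(lam ℓ)⁻¹ : R) ^ ((i : ℕ) + 1) • F i) * (B ℓ)⁻¹ := by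
  rw [hΛ, inv_diagonal_units, sum_diagonal_pow_kronecker, ← map_one leftBlockDiagonal] at hM₁ hM₂
  rw [← map_sub] at hM₁
  have hM₂B : M₂ = leftBlockDiagonal B := by
    rw [hM₂, ← map_add, funext hB]
    rfl
  have right_inv : M₂ * leftBlockDiagonal (fun ℓ ↦ (B ℓ)⁻¹) = 1 :=
    hM₂B ▸ leftBlockDiagonal_mul_inv hBinv
  refine ⟨isUnit_det_of_right_inverse right_inv, ?_⟩
  rw [inv_eq_right_inv right_inv, hM₁, ← map_mul]
  rfl

end LeftBlockDiagonal

theorem stmt_5 (n m : ℕ) (hn : 1 ≤ n) (hm : 1 ≤ m) (p q : ℕ)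
    (lam : Fin n → ℝ) (hlam : ∀ ℓ, lam ℓ ≠ 0)
    (Λ : Matrix (Fin n) (Fin n) ℝ) (hΛ : Λ = Matrix.diagonal lam)
    (F : Fin p → Matrix (Fin m) (Fin m) ℝ)
    (G : Fin q → Matrix (Fin m) (Fin m) ℝ)
    (B : Fin n → Matrix (Fin m) (Fin m) ℝ)
    (hB : ∀ ℓ, B ℓ = 1 + ∑ j : Fin q, ((lam ℓ)⁻¹) ^ ((j : ℕ) + 1) • G j)
    (hBinv : ∀ ℓ, IsUnit (B ℓ).det)
    (M₁ M₂ : Matrix (Fin n × Fin m) (Fin n × Fin m) ℝ)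
    (hM₁ : M₁ = 1 - ∑ i : Fin p, ((Λ⁻¹ ^ ((i : ℕ) + 1)) ⊗ₖ F i))
    (hM₂ : M₂ = 1 + ∑ j : Fin q, ((Λ⁻¹ ^ ((j : ℕ) + 1)) ⊗ₖ G j)) :
    IsUnit M₂.det ∧
      ∀ (ℓ ℓ' : Fin n) (a b : Fin m),
        (M₁ * M₂⁻¹) (ℓ, a) (ℓ', b)
          = if ℓ = ℓ' then
              (((1 : Matrix (Fin m) (Fin m) ℝ)
                  - ∑ i : Fin p, ((lam ℓ)⁻¹) ^ ((i : ℕ) + 1) • F i)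
                * (B ℓ)⁻¹) a b
            else 0 := by
  obtain ⟨hdet, hblock⟩ := stmt_5_general (fun ℓ ↦ Units.mk0 (lam ℓ) (hlam ℓ)) Λ hΛ F G B hB hBinv
    M₁ M₂ hM₁ hM₂
  exact ⟨hdet, fun ℓ ℓ' a b ↦ hblock ▸ leftBlockDiagonal_apply _ ℓ ℓ' a b⟩
end
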